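/- Let K be an algebraically closed field of characteristic 0 and let U be a divisible subgroup of Kˣ such that δ(y) := 2·trdeg(ℚ(y)/ℚ) − ldim(y) ≥ 0 for every finite tuple y from U. Let n ≥ 1 and let W ⊆ (Kˣ)ⁿ be an irreducible variety defined over ℚ with dim W < n/2. Suppose given: (a) proper subtori T₁, …, T_s of (Kˣ)ⁿ such that the minimal torus of every cd-maximal irreducible subvariety of W either equals (Kˣ)ⁿ or belongs to {T₁, …, T_s}; (b) for each i, an integer k_i×n matrix M_i of rank k_i with T_i = {y : y^{M_i} = 1}, and W_i ⊆ (Kˣ)^{k_i} the Zariski closure of {y^{M_i} : y ∈ W}; (c) for each i such that W_i is a proper subvariety of (Kˣ)^{k_i}, proper algebraic subgroups H_{i1}, …, H_{i r_i} of (Kˣ)^{k_i} with W_i ∩ Tor^{k_i} ⊆ ⋃_{j=1}^{r_i} H_{ij}. Set W* = ⋃_{i=1}^{s} { b ∈ W : dim(W ∩ b·T_i) > dim W − dim W_i }. Then for every b ∈ (W ∖ W*) ∩ Uⁿ there exist i ∈ {1,…,s} with W_i a proper subvariety of (Kˣ)^{k_i} and j ∈ {1,…,r_i} such that b^{M_i}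 ∈ H_{ij}. -/

import Mathlib

namespace BadFields

variable (K : Type) [Field K]

/-- The divisible hull `⟨A⟩` of a subset `A ⊆ Kˣ`: all `x` with `x ^ k` in the subgroup
generated by `A` for some `k ≥ 1`.  Note that `⟨∅⟩` is exactly the group of roots of unity. -/
def divHull (A : Set Kˣ) : Subgroup Kˣ where
  carrier := {x | ∃ k : ℕ, k ≠ 0 ∧ x ^ k ∈ Subgroup.closure A}
  one_mem' := ⟨1, one_ne_zero, by simpa using Subgroup.one_mem _⟩
  mul_mem' := by
    rintro x y ⟨k, hk, hx⟩ ⟨l, hl, hy⟩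
    refine ⟨k * l, mul_ne_zero hk hl, ?_⟩
    rw [mul_pow]
    exact Subgroup.mul_mem _ (by rw [pow_mul]; exact Subgroup.pow_mem _ hx l)
      (by rw [mul_comm k l, pow_mul]; exact Subgroup.pow_mem _ hy k)
  inv_mem' := by
    rintro x ⟨k, hk, hx⟩
    exact ⟨k, hk, by rw [inv_pow]; exact Subgroup.inv_mem _ hx⟩

/-- A subgroup `U` of `Kˣ` is divisible if every element has `k`-th roots in `U` for all
`k ≥ 1`. -/
def DivisibleSub (U : Subgroup Kˣ) : Prop :=
  ∀ u ∈ U, ∀ k : ℕ, k ≠ 0 → ∃ v ∈ U, v ^ k = u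

/-- The lattice of multiplicative relations of the tuple `y` modulo the divisible hull of `A`.
Since `Kˣ/⟨A⟩` is torsion-free, this lattice is saturated, and the dimension of the
`ℚ`-subspace of `Kˣ/Tor` spanned by (the images of) `y` over (the image of) `A` equals
`n` minus the rank of this lattice. -/
def relLattice (A : Set Kˣ) {n : ℕ} (y : Fin n → Kˣ) : Submodule ℤ (Fin n → ℤ) where
  carrier := {c | (∏ i, y i ^ c i) ∈ divHull K A}
  zero_mem' := by simpa using Subgroup.one_mem _
  add_mem' := by
    intro c d hc hd
    have h : (∏ i, y i ^ (c + d) i) = (∏ i, y i ^ c i) * ∏ i, y i ^ d i := by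
      rw [← Finset.prod_mul_distrib]
      exact Finset.prod_congr rfl fun i _ => by rw [Pi.add_apply, zpow_add]
    show (∏ i, y i ^ (c + d) i) ∈ divHull K A
    rw [h]
    exact Subgroup.mul_mem _ hc hd
  smul_mem' := by
    intro m c hc
    have h : (∏ i, y i ^ (m • c) i) = (∏ i, y i ^ c i) ^ m := by
      rw [← Finset.prod_zpow]
      exact Finset.prod_congr rfl fun i _ => by
        rw [Pi.smul_apply, smul_eq_mul, mul_comm, zpow_mul]
    show (∏ i, y i ^ (m • c) i) ∈ divHull K A
    rw [h]
    exact Subgroup.zpow_mem _ hc m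

/-- `ldimRel K A y` is the linear dimension `ldim(y/A)`: the dimension of the `ℚ`-subspace
spanned by the images of the coordinates of `y` in `Kˣ/Tor` over the subspace spanned by the
image of `A`. -/
noncomputable def ldimRel (A : Set Kˣ) {n : ℕ} (y : Fin n → Kˣ) : ℕ :=
  n - Module.finrank ℤ (relLattice K A y)

/-- The (absolute) linear dimension `ldim(y)`. -/
noncomputable def ldim {n : ℕ} (y : Fin n → Kˣ) : ℕ := ldimRel K ∅ y

/-- `trdegOver K F s` : the transcendence degree over the subfield `F` of the field generated
by `F` and the set `s`, i.e. the maximal cardinality of a finite subset of `s` which is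
algebraically independent over `F`. -/
noncomputable def trdegOver (F : Subfield K) (s : Set K) : ℕ :=
  sSup {d | ∃ t : Finset K, ↑t ⊆ s ∧ t.card = d ∧
    AlgebraicIndependent F (fun x : {y : K // y ∈ t} => (x : K))}

/-- Transcendence degree over the prime field; in characteristic zero this is
`trdeg(ℚ(s)/ℚ)`. -/
noncomputable def trdegQ (s : Set K) : ℕ := trdegOver K ⊥ s

section Var

variable {ι : Type} [Fintype ι]

/-- The subset of the torus `(Kˣ)^ι` cut out by a set of polynomials. -/
def zeroSet (S : Set (MvPolynomial ι K)) : Set (ι → Kˣ) :=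
  {x | ∀ p ∈ S, MvPolynomial.eval (fun i => (x i : K)) p = 0}

/-- Zariski closed subsets of the torus `(Kˣ)^ι` (closed subvarieties). -/
def IsZClosed (V : Set (ι → Kˣ)) : Prop := ∃ S, V = zeroSet K S

/-- Zariski closed subsets of `(Kˣ)^ι` defined by polynomials all of whose coefficients lie
in `E`; for `E = ↑(⊥ : Subfield K)` (the prime field, i.e. `ℚ` in characteristic `0`) this
means defined over `ℚ`. -/
def IsClosedOver (E : Set K) (V : Set (ι → Kˣ)) : Prop :=
  ∃ S : Set (MvPolynomial ι K),
    (∀ p ∈ S, ∀ m, MvPolynomial.coeff m p ∈ E) ∧ V = zeroSet K S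

/-- Irreducible (nonempty) Zariski closed subsets of the torus `(Kˣ)^ι`. -/
def IsIrredVar (V : Set (ι → Kˣ)) : Prop :=
  IsZClosed K V ∧ V.Nonempty ∧
    ∀ C₁ C₂ : Set (ι → Kˣ), IsZClosed K C₁ → IsZClosed K C₂ →
      V ⊆ C₁ ∪ C₂ → V ⊆ C₁ ∨ V ⊆ C₂

/-- The Zariski closure in `(Kˣ)^ι`. -/
def zcl (S : Set (ι → Kˣ)) : Set (ι → Kˣ) := ⋂₀ {C | IsZClosed K C ∧ S ⊆ C}

/-- The locus of a point `b` over the set of constants `E`: the smallest Zariski closed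
set containing `b` defined by polynomials with coefficients in `E`. -/
def locusOver (E : Set K) (b : ι → Kˣ) : Set (ι → Kˣ) :=
  ⋂₀ {C | IsClosedOver K E C ∧ b ∈ C}

/-- The dimension of a (not necessarily irreducible) Zariski closed subset of `(Kˣ)^ι`:
the supremum of the lengths of strict chains of irreducible closed subsets. -/
noncomputable def vdim (V : Set (ι → Kˣ)) : ℕ :=
  sSup {d | ∃ W : Fin (d + 1) → Set (ι → Kˣ),
    (∀ i, IsIrredVar K (W i) ∧ W i ⊆ V) ∧ StrictMono W}

/-- The monomial map `y ↦ y^M` attached to an integer matrix `M`. -/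
def mpow {k : ℕ} (M : Matrix (Fin k) ι ℤ) (y : ι → Kˣ) : Fin k → Kˣ :=
  fun j => ∏ i, y i ^ M j i

/-- Algebraic subgroups of the torus `(Kˣ)^ι`: subgroups defined by finitely many monomial
equations `y^M = 1`. -/
def IsAlgSubgroup (H : Set (ι → Kˣ)) : Prop :=
  ∃ (k : ℕ) (M : Matrix (Fin k) ι ℤ), H = {y | mpow K M y = 1}

/-- Subtori of `(Kˣ)^ι`: irreducible algebraic subgroups. -/
def IsSubtorus (T : Set (ι → Kˣ)) : Prop := IsAlgSubgroup K T ∧ IsIrredVar K T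

/-- The coset `c · T` (multiplication coordinatewise). -/
def coset (c : ι → Kˣ) (T : Set (ι → Kˣ)) : Set (ι → Kˣ) := (fun t => c * t) '' T

/-- A variety is free if it is not contained in a coset of a proper subtorus. -/
def IsFree (V : Set (ι → Kˣ)) : Prop :=
  ¬ ∃ T c, IsSubtorus K T ∧ T ≠ Set.univ ∧ V ⊆ coset K c T

/-- `T` is the minimal torus of `V`: the smallest subtorus such that `V` is contained in some
coset of it. -/
def IsMinTorus (V T : Set (ι → Kˣ)) : Prop :=
  IsSubtorus K T ∧ (∃ c, V ⊆ coset K c T) ∧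
    ∀ T', IsSubtorus K T' → (∃ c, V ⊆ coset K c T') → T ⊆ T'

/-- The codimension `cd(V) = dim(minimal torus of V) - dim V`. -/
noncomputable def cd (V : Set (ι → Kˣ)) : ℕ :=
  sInf {d | ∃ T c, IsSubtorus K T ∧ V ⊆ coset K c T ∧ d = vdim K T} - vdim K V

/-- `S` is cd-maximal in `W`. -/
def CdMaximal (S W : Set (ι → Kˣ)) : Prop :=
  IsIrredVar K S ∧ S ⊆ W ∧
    ∀ S', IsIrredVar K S' → S ⊂ S' → S' ⊆ W → cd K S < cd K S'

/-- `√[m]{V}`, the preimage of `V` under coordinatewise `m`-th powers. -/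
def mroot (m : ℕ) (V : Set (ι → Kˣ)) : Set (ι → Kˣ) := {a | (fun i => a i ^ m) ∈ V}

/-- An irreducible variety `V` is Kummer generic if `√[m]{V}` is irreducible for all `m ≥ 1`. -/
def KummerGeneric (V : Set (ι → Kˣ)) : Prop :=
  IsIrredVar K V ∧ ∀ m : ℕ, 1 ≤ m → IsIrredVar K (mroot K m V)

/-- Irreducible components of a set `S`: maximal irreducible closed subsets of `S`. -/
def IsIrredComponent (V' S : Set (ι → Kˣ)) : Prop :=
  IsIrredVar K V' ∧ V' ⊆ S ∧ ∀ W, IsIrredVar K W → V' ⊆ W → W ⊆ S → W = V'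

end Var

/-- A correspondence torus: an `n`-dimensional subtorus of `(Kˣ)ⁿ × (Kˣ)ⁿ` which projects
onto `(Kˣ)ⁿ` in both coordinates.  We identify `(Kˣ)ⁿ × (Kˣ)ⁿ` with `(Kˣ)^(Fin n ⊕ Fin n)`,
a pair `(x, y)` corresponding to `Sum.elim x y`. -/
def IsCorrTorus {n : ℕ} (T : Set ((Fin n ⊕ Fin n) → Kˣ)) : Prop :=
  IsSubtorus K T ∧ vdim K T = n ∧
    (∀ x : Fin n → Kˣ, ∃ y, Sum.elim x y ∈ T) ∧
    (∀ y : Fin n → Kˣ, ∃ x, Sum.elim x y ∈ T)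

/-- `T` induces a toric correspondence between `V` and `V'`: the Zariski closures of the two
projections of `(V × V') ∩ T` are `V` and `V'` respectively. -/
def ToricCorr {n : ℕ} (T : Set ((Fin n ⊕ Fin n) → Kˣ)) (V V' : Set (Fin n → Kˣ)) : Prop :=
  zcl K ((fun p => p ∘ Sum.inl) '' {p | p ∈ T ∧ (p ∘ Sum.inl) ∈ V ∧ (p ∘ Sum.inr) ∈ V'}) = V ∧
  zcl K ((fun p => p ∘ Sum.inr) '' {p | p ∈ T ∧ (p ∘ Sum.inl) ∈ V ∧ (p ∘ Sum.inr) ∈ V'}) = V'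

/-- The set of elements of `K` underlying a set of units. -/
def unitSet (A : Set Kˣ) : Set K := (fun u : Kˣ => (u : K)) '' A

/-- `trdeg(y/A)`, the transcendence degree of `ℚ(A ∪ y)` over `ℚ(A)`. -/
noncomputable def trdegRel (A : Set Kˣ) {n : ℕ} (y : Fin n → Kˣ) : ℕ :=
  trdegOver K (Subfield.closure (unitSet K A)) (Set.range fun i => (y i : K))

/-- The predimension `δ(y/A) = 2 trdeg(y/A) - ldim(y/A)`. -/
noncomputable def pdelta (A : Set Kˣ) {n : ℕ} (y : Fin n → Kˣ) : ℤ :=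
  2 * (trdegRel K A y : ℤ) - (ldimRel K A y : ℤ)

/-- The extension `⟨A ∪ b⟩/A` is minimal prealgebraic of length `n`. -/
def MinPrealg {n : ℕ} (A : Set Kˣ) (b : Fin n → Kˣ) : Prop :=
  2 ≤ n ∧ ldimRel K A b = n ∧ pdelta K A b = 0 ∧
    ∀ B' : Set Kˣ, B' = ↑(divHull K B') → A ⊂ B' → B' ⊂ ↑(divHull K (A ∪ Set.range b)) →
      pdelta K B' b < 0

end BadFields

namespace BadFields
open MvPolynomial

/-! ### Dictionary between closed subsets of the torus and ideals -/

set_option linter.unusedSectionVars false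
section Dict

variable {K : Type} [Field K] {ι : Type} [Fintype ι]

/-- The vanishing ideal of a subset of the torus. -/
def vI (V : Set (ι → Kˣ)) : Ideal (MvPolynomial ι K) where
  carrier := {p | ∀ x ∈ V, eval (fun i => (x i : K)) p = 0}
  zero_mem' := by intro x _; simp
  add_mem' := by
    intro p q hp hq x hx
    rw [map_add, hp x hx, hq x hx, add_zero]
  smul_mem' := by
    intro c p hp x hx
    rw [smul_eq_mul, map_mul, hp x hx, mul_zero]

lemma mem_vI {V : Set (ι → Kˣ)} {p : MvPolynomial ι K} :
    p ∈ vI V ↔ ∀ x ∈ V, eval (fun i => (x i : K)) p = 0 := Iff.rfl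

lemma vI_anti {V V' : Set (ι → Kˣ)} (h : V ⊆ V') : vI V' ≤ vI V :=
  fun _ hp x hx => hp x (h hx)

lemma zeroSet_vI {V : Set (ι → Kˣ)} (h : IsZClosed K V) : zeroSet K (vI V : Set _) = V := by
  obtain ⟨S, rfl⟩ := h
  ext x
  constructor
  · intro hx p hp
    exact hx p (fun y hy => hy p hp)
  · intro hx p hp
    exact hp x hx

lemma isZClosed_zcl (X : Set (ι → Kˣ)) : IsZClosed K (zcl K X) := by
  refine ⟨(vI X : Set _), ?_⟩
  ext x
  constructor
  · intro hx
    exact hx _ ⟨⟨_, rfl⟩, fun y hy p hp => hp y hy⟩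
  · rintro hx C ⟨hC, hXC⟩
    rw [← zeroSet_vI hC]
    intro p hp
    exact hx p (vI_anti hXC hp)

lemma subset_zcl (X : Set (ι → Kˣ)) : X ⊆ zcl K X := fun _ hx _ hC => hC.2 hx

lemma zcl_subset {X C : Set (ι → Kˣ)} (hC : IsZClosed K C) (h : X ⊆ C) : zcl K X ⊆ C :=
  fun _ hx => hx C ⟨hC, h⟩

lemma zcl_eq {C : Set (ι → Kˣ)} (hC : IsZClosed K C) : zcl K C = C :=
  Set.Subset.antisymm (zcl_subset hC le_rfl) (subset_zcl C)

lemma vI_zcl (X : Set (ι → Kˣ)) : vI (zcl K X) = vI X := by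
  apply le_antisymm (vI_anti (subset_zcl X))
  intro p hp x hx
  have : zcl K X ⊆ zeroSet K {p} := zcl_subset ⟨_, rfl⟩ (by
    rintro y hy q rfl
    exact hp y hy)
  exact this hx p rfl

/-- Primality criterion for irreducibility of a Zariski closure. -/
lemma isIrredVar_zcl {X : Set (ι → Kˣ)} (hne : X.Nonempty)
    (h : ∀ f g : MvPolynomial ι K, f * g ∈ vI X → f ∈ vI X ∨ g ∈ vI X) :
    IsIrredVar K (zcl K X) := by
  refine ⟨isZClosed_zcl X, hne.mono (subset_zcl X), ?_⟩
  intro C₁ C₂ h₁ h₂ hsub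
  by_contra hcon
  push Not at hcon
  obtain ⟨hc1, hc2⟩ := hcon
  obtain ⟨S₁, rfl⟩ := id h₁
  obtain ⟨S₂, rfl⟩ := id h₂
  have e1 : ∃ f ∈ S₁, f ∉ vI X := by
    by_contra hh
    push Not at hh
    exact hc1 (zcl_subset h₁ fun x hx p hp => hh p hp x hx)
  have e2 : ∃ f ∈ S₂, f ∉ vI X := by
    by_contra hh
    push Not at hh
    exact hc2 (zcl_subset h₂ fun x hx p hp => hh p hp x hx)
  obtain ⟨f, hf, hf'⟩ := e1
  obtain ⟨g, hg, hg'⟩ := e2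
  rcases h f g (fun x hx => by
    rw [map_mul]
    rcases hsub (subset_zcl X hx) with h | h
    · rw [h f hf, zero_mul]
    · rw [h g hg, mul_zero]) with h | h
  · exact hf' h
  · exact hg' h

lemma vI_isPrime {V : Set (ι → Kˣ)} (h : IsIrredVar K V) : (vI V).IsPrime := by
  obtain ⟨hc, hne, hirr⟩ := h
  refine ⟨?_, ?_⟩
  · rw [Ideal.ne_top_iff_one]
    intro h1
    obtain ⟨x, hx⟩ := hne
    simpa using h1 x hx
  · intro f g hfg
    rcases hirr (zeroSet K {f}) (zeroSet K {g}) ⟨_, rfl⟩ ⟨_, rfl⟩ (by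
      intro x hx
      have := hfg x hx
      rw [map_mul, mul_eq_zero] at this
      rcases this with h | h
      · left; rintro p rfl; exact h
      · right; rintro p rfl; exact h) with h | h
    · left; intro x hx; exact h hx f rfl
    · right; intro x hx; exact h hx g rfl

lemma prodX_notMem_vI {V : Set (ι → Kˣ)} (h : V.Nonempty) :
    (∏ i, X i : MvPolynomial ι K) ∉ vI V := by
  obtain ⟨x, hx⟩ := h
  intro hh
  have := hh x hx
  rw [map_prod, Finset.prod_eq_zero_iff] at this
  obtain ⟨i, _, hi⟩ := this
  simp at hi

/-- Torus version of the Nullstellensatz for primes. -/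
lemma torus_nullstellensatz {k : Type} [Field k] [IsAlgClosed k]
    (P : Ideal (MvPolynomial ι k)) [hP : P.IsPrime]
    (hX : (∏ i, X i : MvPolynomial ι k) ∉ P) {p : MvPolynomial ι k}
    (hp : ∀ x : ι → kˣ, (∀ q ∈ P, eval (fun i => (x i : k)) q = 0) →
      eval (fun i => (x i : k)) p = 0) : p ∈ P := by
  have h : p * ∏ i, X i ∈ vanishingIdeal k (zeroLocus k P) := by
    intro y hy
    rw [map_mul, map_prod]
    by_cases hz : ∃ i, y i = 0
    · obtain ⟨i, hi⟩ := hz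
      rw [Finset.prod_eq_zero (Finset.mem_univ i), mul_zero]
      simpa using hi
    · push Not at hz
      have := hp (fun i => Units.mk0 (y i) (hz i)) (fun q hq => by
        simpa [coe_aeval_eq_eval] using hy q hq)
      have h2 : aeval y p = 0 := by simpa [coe_aeval_eq_eval] using this
      rw [h2, zero_mul]
  rw [IsPrime.vanishingIdeal_zeroLocus] at h
  exact (hP.mem_or_mem h).resolve_right hX

lemma vI_zeroSet [IsAlgClosed K] (P : Ideal (MvPolynomial ι K)) [hP : P.IsPrime]
    (hX : (∏ i, X i : MvPolynomial ι K) ∉ P) : vI (zeroSet K (P : Set _)) = P := by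
  apply le_antisymm
  · intro p hp
    exact torus_nullstellensatz P hX fun x hx => hp x hx
  · intro p hp x hx
    exact hx p hp

lemma isIrredVar_zeroSet [IsAlgClosed K] (P : Ideal (MvPolynomial ι K)) [hP : P.IsPrime]
    (hX : (∏ i, X i : MvPolynomial ι K) ∉ P) : IsIrredVar K (zeroSet K (P : Set (MvPolynomial ι K))) := by
  have hcl : IsZClosed K (zeroSet K (P : Set (MvPolynomial ι K))) := ⟨_, rfl⟩
  rw [← zcl_eq hcl]
  apply isIrredVar_zcl
  · by_contra hne
    rw [Set.not_nonempty_iff_eq_empty] at hne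
    apply hP.ne_top
    rw [← vI_zeroSet P hX, hne, Ideal.eq_top_iff_one]
    intro x hx
    exact absurd hx (Set.notMem_empty x)
  · rw [vI_zeroSet P hX]
    intro f g hfg
    exact hP.mem_or_mem hfg

lemma eq_zero_of_vanish [Infinite K] (p : MvPolynomial ι K)
    (h : ∀ x : ι → Kˣ, eval (fun i => (x i : K)) p = 0) : p = 0 := by
  have : p * ∏ i, X i = 0 := by
    apply MvPolynomial.funext
    intro y
    rw [map_mul, map_prod, map_zero]
    by_cases hz : ∃ i, y i = 0
    · obtain ⟨i, hi⟩ := hz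
      rw [Finset.prod_eq_zero (Finset.mem_univ i), mul_zero]
      simpa using hi
    · push Not at hz
      have := h (fun i => Units.mk0 (y i) (hz i))
      simp only [Units.val_mk0] at this
      rw [this, zero_mul]
  rcases mul_eq_zero.mp this with h | h
  · exact h
  · rw [Finset.prod_eq_zero_iff] at h
    obtain ⟨i, _, hi⟩ := h
    exact absurd hi (X_ne_zero i)

lemma isIrredVar_univ [Infinite K] : IsIrredVar K (Set.univ : Set (ι → Kˣ)) := by
  have hcl : IsZClosed K (Set.univ : Set (ι → Kˣ)) := ⟨∅, by ext x; simp [zeroSet]⟩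
  rw [← zcl_eq hcl]
  apply isIrredVar_zcl ⟨1, Set.mem_univ _⟩
  intro f g hfg
  have := eq_zero_of_vanish (f * g) fun x => hfg x trivial
  rcases mul_eq_zero.mp this with h | h
  · left; rw [h]; exact zero_mem _
  · right; rw [h]; exact zero_mem _

/-- Chains of irreducible subvarieties have length at most the number of coordinates. -/
lemma chain_le {d : ℕ} (Wc : Fin (d + 1) → Set (ι → Kˣ)) (hW : ∀ i, IsIrredVar K (Wc i))
    (hm : StrictMono Wc) : d ≤ Fintype.card ι := by
  let f : Fin (d + 1) → PrimeSpectrum (MvPolynomial ι K) :=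
    fun i => ⟨vI (Wc i.rev), vI_isPrime (hW _)⟩
  have hf : StrictMono f := by
    intro i j hij
    have h1 : Wc j.rev ⊂ Wc i.rev := hm (Fin.rev_lt_rev.mpr hij)
    show vI (Wc i.rev) < vI (Wc j.rev)
    apply lt_of_le_of_ne (vI_anti h1.subset)
    intro he
    apply h1.ne
    rw [← zeroSet_vI (hW j.rev).1, ← zeroSet_vI (hW i.rev).1, he]
  let l : LTSeries (PrimeSpectrum (MvPolynomial ι K)) := LTSeries.mk d f hf
  have h := Order.LTSeries.length_le_krullDim l
  have h2 : ringKrullDim (MvPolynomial ι K) = Nat.card ι := by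
    rw [MvPolynomial.ringKrullDim_of_isNoetherianRing, ringKrullDim_eq_zero_of_field, zero_add]
  change ((d : ℕ) : WithBot ℕ∞) ≤ ringKrullDim (MvPolynomial ι K) at h
  rw [h2, Nat.card_eq_fintype_card] at h
  exact_mod_cast h

lemma vdim_bdd (V : Set (ι → Kˣ)) : BddAbove {d | ∃ W : Fin (d + 1) → Set (ι → Kˣ),
    (∀ i, IsIrredVar K (W i) ∧ W i ⊆ V) ∧ StrictMono W} := by
  refine ⟨Fintype.card ι, ?_⟩
  rintro d ⟨Wc, h, hm⟩
  exact chain_le Wc (fun i => (h i).1) hm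

lemma le_vdim {V : Set (ι → Kˣ)} {d : ℕ} (Wc : Fin (d + 1) → Set (ι → Kˣ))
    (h : ∀ i, IsIrredVar K (Wc i) ∧ Wc i ⊆ V) (hm : StrictMono Wc) : d ≤ vdim K V :=
  le_csSup (vdim_bdd V) ⟨Wc, h, hm⟩

lemma vdim_le {V : Set (ι → Kˣ)} {N : ℕ}
    (h : ∀ (d : ℕ) (Wc : Fin (d + 1) → Set (ι → Kˣ)),
      (∀ i, IsIrredVar K (Wc i) ∧ Wc i ⊆ V) → StrictMono Wc → d ≤ N) : vdim K V ≤ N := by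
  unfold vdim
  by_cases hne : {d | ∃ W : Fin (d + 1) → Set (ι → Kˣ),
    (∀ i, IsIrredVar K (W i) ∧ W i ⊆ V) ∧ StrictMono W}.Nonempty
  · apply csSup_le hne
    rintro d ⟨Wc, h1, h2⟩
    exact h d Wc h1 h2
  · rw [Set.not_nonempty_iff_eq_empty] at hne
    rw [hne]
    simp

lemma vdim_mono {V V' : Set (ι → Kˣ)} (h : V ⊆ V') : vdim K V ≤ vdim K V' :=
  vdim_le fun _ Wc h1 h2 => le_vdim Wc (fun i => ⟨(h1 i).1, (h1 i).2.trans h⟩) h2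

lemma vdim_le_card (V : Set (ι → Kˣ)) : vdim K V ≤ Fintype.card ι :=
  vdim_le fun _ Wc h1 h2 => chain_le Wc (fun i => (h1 i).1) h2

end Dict
end BadFields

namespace BadFields
open MvPolynomial

/-! ### Lower bounds for the dimension -/

/-- Going-up: chains of primes lift along injective integral extensions. -/
lemma exists_chain_over {R S : Type} [CommRing R] [CommRing S] [Algebra R S]
    [Algebra.IsIntegral R S] (hinj : Function.Injective (algebraMap R S))
    (d : ℕ) (p : Fin (d + 1) → PrimeSpectrum R) (hp : StrictMono p) :
    ∃ q : Fin (d + 1) → PrimeSpectrum S, StrictMono q ∧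
      ∀ i, (q i).asIdeal.comap (algebraMap R S) = (p i).asIdeal := by
  have key : ∃ q : ℕ → Ideal S, ∀ m, ∀ hm : m < d + 1, (q m).IsPrime ∧
      (q m).comap (algebraMap R S) = (p ⟨m, hm⟩).asIdeal ∧ ∀ l < m, q l ≤ q m := by
    suffices h : ∀ N : ℕ, N ≤ d + 1 → ∃ q : ℕ → Ideal S, ∀ m, ∀ hm : m < d + 1, m < N →
        (q m).IsPrime ∧
        (q m).comap (algebraMap R S) = (p ⟨m, hm⟩).asIdeal ∧ ∀ l < m, q l ≤ q m by
      obtain ⟨q, hq⟩ := h (d + 1) le_rfl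
      exact ⟨q, fun m hm => hq m hm hm⟩
    intro N
    induction N with
    | zero => exact fun _ => ⟨fun _ => ⊥, fun m hm h => absurd h (Nat.not_lt_zero _)⟩
    | succ N ih =>
      intro hN
      obtain ⟨q, hq⟩ := ih (by omega)
      have hstep : ∃ Q : Ideal S, Q.IsPrime ∧
          Q.comap (algebraMap R S) = (p ⟨N, hN⟩).asIdeal ∧ ∀ l < N, q l ≤ Q := by
        have := (p ⟨N, hN⟩).isPrime
        rcases Nat.eq_zero_or_pos N with h0 | hpos
        · obtain ⟨Q, _, h1, h2⟩ := Ideal.exists_ideal_over_prime_of_isIntegral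
            (p ⟨N, hN⟩).asIdeal (⊥ : Ideal S) (by
              intro x hx
              rw [Ideal.mem_comap, Ideal.mem_bot] at hx
              rw [(map_eq_zero_iff _ hinj).mp hx]
              exact zero_mem _)
          exact ⟨Q, h1, h2, fun l hl => by omega⟩
        · obtain ⟨a1, a2, a3⟩ := hq (N - 1) (by omega) (by omega)
          obtain ⟨Q, h0, h1, h2⟩ := Ideal.exists_ideal_over_prime_of_isIntegral
            (p ⟨N, hN⟩).asIdeal (q (N - 1)) (by
              rw [a2]
              exact (hp (show (⟨N - 1, by omega⟩ : Fin (d + 1)) < ⟨N, hN⟩ by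
                rw [Fin.mk_lt_mk]; omega)).le)
          refine ⟨Q, h1, h2, fun l hl => ?_⟩
          rcases Nat.lt_or_ge l (N - 1) with h | h
          · exact (a3 l h).trans h0
          · have : l = N - 1 := by omega
            rw [this]; exact h0
      obtain ⟨Q, hQ1, hQ2, hQ3⟩ := hstep
      refine ⟨Function.update q N Q, fun m hm hmN => ?_⟩
      rcases Nat.lt_or_ge m N with h | h
      · rw [Function.update_of_ne (by omega)]
        obtain ⟨a1, a2, a3⟩ := hq m hm h
        refine ⟨a1, a2, fun l hl => ?_⟩
        rw [Function.update_of_ne (by omega)]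
        exact a3 l hl
      · obtain rfl : m = N := by omega
        rw [Function.update_self]
        refine ⟨hQ1, hQ2, fun l hl => ?_⟩
        rw [Function.update_of_ne (by omega)]
        exact hQ3 l hl
  obtain ⟨q, hq⟩ := key
  refine ⟨fun i => ⟨q i, (hq i i.2).1⟩, ?_, fun i => (hq i i.2).2.1⟩
  intro i j hij
  show q i < q j
  apply lt_of_le_of_ne ((hq j j.2).2.2 i hij)
  intro he
  have h1 := (hq i i.2).2.1
  rw [he, (hq j j.2).2.1] at h1
  exact (hp hij).ne (PrimeSpectrum.ext h1.symm)

/-- The Krull dimension of a finitely generated domain is at least the size of any algebraically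
independent family. -/
lemma exists_prime_chain {K A : Type} [Field K] [CommRing A] [IsDomain A] [Algebra K A]
    [Algebra.FiniteType K A] {τ : Type} [Fintype τ] (x : τ → A) (hx : AlgebraicIndependent K x) :
    ∃ q : Fin (Fintype.card τ + 1) → PrimeSpectrum A, StrictMono q := by
  obtain ⟨m, g, hg, h_integral⟩ := exists_integral_inj_algHom_of_fg K A
  let : Algebra (MvPolynomial (Fin m) K) A := g.toRingHom.toAlgebra
  have hmap : ∀ z, algebraMap (MvPolynomial (Fin m) K) A z = g z := fun _ => rfl
  have : IsScalarTower K (MvPolynomial (Fin m) K) A := IsScalarTower.of_algebraMap_eq fun c => by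
    rw [hmap, algebraMap_eq]
    exact (g.commutes c).symm
  have : Algebra.IsIntegral (MvPolynomial (Fin m) K) A := ⟨h_integral⟩
  have : FaithfulSMul (MvPolynomial (Fin m) K) A :=
    (faithfulSMul_iff_algebraMap_injective _ _).mpr hg
  have hb := (IsTranscendenceBasis.mvPolynomial (Fin m) K).algebraMap_comp (A := A)
  have h1 := hb.cardinalMk_eq_trdeg
  have h2 := hx.cardinalMk_le_trdeg
  rw [← h1] at h2
  have hle : Fintype.card τ ≤ m := by simpa using h2
  have hdim : ((Fintype.card τ : ℕ) : WithBot ℕ∞) ≤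
      Order.krullDim (PrimeSpectrum (MvPolynomial (Fin m) K)) := by
    change _ ≤ ringKrullDim (MvPolynomial (Fin m) K)
    rw [MvPolynomial.ringKrullDim_of_isNoetherianRing, ringKrullDim_eq_zero_of_field, zero_add]
    simpa using hle
  obtain ⟨l, hl⟩ := Order.le_krullDim_iff.mp hdim
  obtain ⟨q, hq, _⟩ := exists_chain_over hg (Fintype.card τ)
    (fun i => l (i.cast (by rw [hl]))) (fun i j hij => l.strictMono hij)
  exact ⟨q, hq⟩

/-- Lower bound for the dimension: independent coordinates. -/
lemma card_le_vdim {K : Type} [Field K] [IsAlgClosed K] {ι : Type} [Fintype ι]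
    {V : Set (ι → Kˣ)} (hV : IsIrredVar K V) {τ : Type} [Fintype τ] (j : τ → ι)
    (h : ∀ p : MvPolynomial τ K, rename j p ∈ vI V → p = 0) : Fintype.card τ ≤ vdim K V := by
  have hP := vI_isPrime hV
  have hXn := prodX_notMem_vI hV.2.1
  set P := vI V with hPdef
  set f : MvPolynomial ι K := ∏ i, X i with hf
  let A := Localization.Away (Ideal.Quotient.mk P f)
  have hf0 : Ideal.Quotient.mk P f ≠ 0 := by
    rwa [Ne, Ideal.Quotient.eq_zero_iff_mem]
  have hM : Submonoid.powers (Ideal.Quotient.mk P f) ≤ nonZeroDivisors (MvPolynomial ι K ⧸ P) :=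
    powers_le_nonZeroDivisors_of_noZeroDivisors hf0
  have : IsDomain A := IsLocalization.isDomain_localization hM
  have hAinj : Function.Injective (algebraMap (MvPolynomial ι K ⧸ P) A) :=
    IsLocalization.injective A hM
  have : Algebra.FiniteType (MvPolynomial ι K ⧸ P) A :=
    IsLocalization.finiteType_of_monoid_fg (Submonoid.powers (Ideal.Quotient.mk P f)) A
  have : Algebra.FiniteType K A := Algebra.FiniteType.trans (S := MvPolynomial ι K ⧸ P)
    inferInstance inferInstance
  let ψ : MvPolynomial ι K →ₐ[K] A :=
    (IsScalarTower.toAlgHom K (MvPolynomial ι K ⧸ P) A).comp (Ideal.Quotient.mkₐ K P)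
  have hψ : ∀ p, ψ p = algebraMap (MvPolynomial ι K ⧸ P) A (Ideal.Quotient.mk P p) := fun _ => rfl
  have hker : ∀ p, ψ p = 0 ↔ p ∈ P := fun p => by
    rw [hψ, map_eq_zero_iff _ hAinj, Ideal.Quotient.eq_zero_iff_mem]
  have hind : AlgebraicIndependent K (fun t : τ => ψ (X (j t))) := by
    rw [algebraicIndependent_iff]
    intro p hp
    apply h p
    rw [← hker, ← hp]
    have : ψ.comp (rename j) = aeval (fun t : τ => ψ (X (j t))) := by
      ext t; simp
    rw [← this]; rfl
  obtain ⟨q, hq⟩ := exists_prime_chain _ hind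
  let Q : Fin (Fintype.card τ + 1) → Ideal (MvPolynomial ι K) :=
    fun i => (q i).asIdeal.comap ψ
  have hQp : ∀ i, (Q i).IsPrime := fun i => (q i).isPrime.comap ψ
  have hQP : ∀ i, P ≤ Q i := fun i p hp => by
    show ψ p ∈ (q i).asIdeal
    rw [(hker p).mpr hp]; exact zero_mem _
  have hQX : ∀ i, f ∉ Q i := fun i hfi => by
    have hu : IsUnit (ψ f) := by
      rw [hψ]
      exact IsLocalization.Away.algebraMap_isUnit (S := A) (Ideal.Quotient.mk P f)
    exact (q i).isPrime.ne_top (Ideal.eq_top_of_isUnit_mem _ hfi hu)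
  have hQm : StrictMono Q := by
    intro a b hab
    have h1 := hq hab
    apply lt_of_le_of_ne (Ideal.comap_mono h1.le)
    intro he
    apply h1.ne
    apply PrimeSpectrum.ext
    have h2 : (q a).asIdeal.comap (algebraMap (MvPolynomial ι K ⧸ P) A)
        = (q b).asIdeal.comap (algebraMap (MvPolynomial ι K ⧸ P) A) := by
      apply Ideal.comap_injective_of_surjective (Ideal.Quotient.mk P) Ideal.Quotient.mk_surjective
      exact he
    have h3 := IsLocalization.map_under (Submonoid.powers (Ideal.Quotient.mk P f)) A (q a).asIdeal
    have h4 := IsLocalization.map_under (Submonoid.powers (Ideal.Quotient.mk P f)) A (q b).asIdeal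
    change Ideal.map _ (Ideal.comap _ _) = _ at h3
    change Ideal.map _ (Ideal.comap _ _) = _ at h4
    rw [← h3, h2, h4]
  refine le_vdim (fun i => zeroSet K (Q i.rev : Set (MvPolynomial ι K))) ?_ ?_
  · intro i
    have := hQp i.rev
    refine ⟨isIrredVar_zeroSet _ (hQX _), ?_⟩
    conv_rhs => rw [← zeroSet_vI hV.1]
    intro x hx p hp
    exact hx p (hQP _ hp)
  · intro a b hab
    have h1 := hQm (Fin.rev_lt_rev.mpr hab)
    refine lt_of_le_of_ne (fun x hx p hp => hx p (h1.le hp)) ?_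
    intro he
    have := hQp a.rev
    have := hQp b.rev
    have h3 : vI (zeroSet K (Q a.rev : Set (MvPolynomial ι K)))
      = vI (zeroSet K (Q b.rev : Set (MvPolynomial ι K))) := congrArg vI he
    rw [vI_zeroSet _ (hQX _), vI_zeroSet _ (hQX _)] at h3
    exact h1.ne h3.symm

lemma vdim_univ {K : Type} [Field K] [IsAlgClosed K] {ι : Type} [Fintype ι] :
    vdim K (Set.univ : Set (ι → Kˣ)) = Fintype.card ι := by
  have : Infinite K := IsAlgClosed.instInfinite
  apply le_antisymm (vdim_le_card _)
  refine card_le_vdim isIrredVar_univ (id : ι → ι) fun p hp => ?_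
  rw [rename_id_apply] at hp
  exact eq_zero_of_vanish p fun x => hp x trivial

end BadFields

namespace BadFields
open MvPolynomial

/-! ### Monomial maps and tori attached to saturated lattices -/

section Mono

variable {K : Type} [Field K]

/-- The character `y ↦ y^c`. -/
def chi {ι : Type} [Fintype ι] (y : ι → Kˣ) (c : ι → ℤ) : Kˣ := ∏ i, y i ^ c i

section
variable {ι : Type} [Fintype ι]

lemma chi_zero (y : ι → Kˣ) : chi y 0 = 1 := by simp [chi]

lemma chi_add (y : ι → Kˣ) (c d : ι → ℤ) : chi y (c + d) = chi y c * chi y d := by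
  simp [chi, zpow_add, Finset.prod_mul_distrib]

lemma chi_smul (y : ι → Kˣ) (m : ℤ) (c : ι → ℤ) : chi y (m • c) = chi y c ^ m := by
  simp only [chi, ← Finset.prod_zpow, Pi.smul_apply, smul_eq_mul]
  exact Finset.prod_congr rfl fun i _ => by rw [mul_comm, zpow_mul]

lemma chi_mul (y z : ι → Kˣ) (c : ι → ℤ) : chi (y * z) c = chi y c * chi z c := by
  simp [chi, mul_zpow, Finset.prod_mul_distrib]

lemma chi_single [DecidableEq ι] (y : ι → Kˣ) (i : ι) : chi y (Pi.single i 1) = y i := by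
  rw [chi, Finset.prod_eq_single i]
  · simp
  · intro j _ hj
    simp [Pi.single_eq_of_ne hj]
  · simp

/-- `chi y` as a linear map into the additive group of `Kˣ`. -/
def chiHom (y : ι → Kˣ) : (ι → ℤ) →ₗ[ℤ] Additive Kˣ where
  toFun c := Additive.ofMul (chi y c)
  map_add' c d := by rw [chi_add]; rfl
  map_smul' m c := by rw [chi_smul]; rfl

lemma chiHom_apply (y : ι → Kˣ) (c : ι → ℤ) : chiHom y c = Additive.ofMul (chi y c) := rfl

lemma mpow_apply {k : ℕ} (M : Matrix (Fin k) ι ℤ) (y : ι → Kˣ) (j : Fin k) :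
    mpow K M y j = chi y (M j) := rfl

lemma chi_mul_prod_pow (y : ι → Kˣ) (c : ι → ℤ) :
    ∃ (m : ℕ) (q : MvPolynomial ι K), ∀ y : ι → Kˣ, eval (fun i => (y i : K)) q =
      ((∏ i, y i : Kˣ) : K) ^ m * ((chi y c : Kˣ) : K) := by
  refine ⟨∑ i, (c i).natAbs, ∏ i, X i ^ (c i + (∑ i, (c i).natAbs : ℕ)).toNat, fun y => ?_⟩
  set m := ∑ i, (c i).natAbs with hm
  have hmi : ∀ i, 0 ≤ c i + (m : ℤ) := fun i => by
    have : (c i).natAbs ≤ m := Finset.single_le_sum (f := fun i => (c i).natAbs)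
      (fun _ _ => Nat.zero_le _) (Finset.mem_univ i)
    omega
  rw [map_prod]
  simp only [map_pow, eval_X]
  rw [← Units.val_pow_eq_pow_val, ← Units.val_mul, chi, ← Finset.prod_pow,
    ← Finset.prod_mul_distrib, Units.coe_prod]
  refine Finset.prod_congr rfl fun i _ => ?_
  rw [← Units.val_pow_eq_pow_val, ← zpow_natCast, ← zpow_natCast, ← zpow_add,
    Int.toNat_of_nonneg (hmi i), add_comm]

/-- Pullback of a polynomial under a monomial map, up to a monomial factor. -/
lemma exists_pullback {k : ℕ} (M : Matrix (Fin k) ι ℤ) (p : MvPolynomial (Fin k) K) :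
    ∃ (m : ℕ) (q : MvPolynomial ι K), ∀ y : ι → Kˣ, eval (fun i => (y i : K)) q =
      ((∏ i, y i : Kˣ) : K) ^ m * eval (fun j => ((mpow K M y j : Kˣ) : K)) p := by
  induction p using MvPolynomial.induction_on with
  | C a => exact ⟨0, C a, fun y => by simp⟩
  | add p q hp hq =>
    obtain ⟨m1, q1, h1⟩ := hp
    obtain ⟨m2, q2, h2⟩ := hq
    refine ⟨m1 + m2, (∏ i, X i) ^ m2 * q1 + (∏ i, X i) ^ m1 * q2, fun y => ?_⟩
    simp only [map_add, map_mul, map_pow, map_prod, eval_X, h1, h2, Units.coe_prod]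
    ring
  | mul_X p j hp =>
    obtain ⟨m1, q1, h1⟩ := hp
    obtain ⟨m2, q2, h2⟩ := chi_mul_prod_pow (K := K) 1 (M j)
    refine ⟨m1 + m2, q1 * q2, fun y => ?_⟩
    simp only [map_mul, eval_X, h1, h2, mpow_apply]
    ring

lemma isZClosed_mpow {k : ℕ} (M : Matrix (Fin k) ι ℤ) {C : Set (Fin k → Kˣ)}
    (hC : IsZClosed K C) : IsZClosed K {y | mpow K M y ∈ C} := by
  obtain ⟨S, rfl⟩ := hC
  choose m q h using exists_pullback (K := K) M
  refine ⟨q '' S, ?_⟩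
  have hu : ∀ (y : ι → Kˣ) (m : ℕ), ((∏ i, y i : Kˣ) : K) ^ m ≠ 0 :=
    fun y m => pow_ne_zero _ (Units.ne_zero _)
  ext y
  constructor
  · rintro hy _ ⟨p, hp, rfl⟩
    rw [h, hy p hp, mul_zero]
  · intro hy p hp
    have := hy _ ⟨p, hp, rfl⟩
    rw [h] at this
    exact (mul_eq_zero.mp this).resolve_left (hu _ _)

lemma isZClosed_singleton (a : ι → Kˣ) : IsZClosed K {a} := by
  refine ⟨Set.range fun i => X i - C (a i : K), ?_⟩
  ext y
  constructor
  · rintro rfl _ ⟨i, rfl⟩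
    simp
  · intro hy
    have : ∀ i, y i = a i := fun i => by
      have := hy _ ⟨i, rfl⟩
      simp only [map_sub, eval_X, eval_C, sub_eq_zero] at this
      exact Units.ext this
    exact funext this

lemma isZClosed_inter {C D : Set (ι → Kˣ)} (hC : IsZClosed K C) (hD : IsZClosed K D) :
    IsZClosed K (C ∩ D) := by
  obtain ⟨S, rfl⟩ := hC
  obtain ⟨S', rfl⟩ := hD
  refine ⟨S ∪ S', ?_⟩
  ext y
  simp only [zeroSet, Set.mem_inter_iff, Set.mem_setOf_eq, Set.mem_union, or_imp, forall_and]

lemma isZClosed_chi (c : ι → ℤ) (a : Kˣ) : IsZClosed K {y : ι → Kˣ | chi y c = a} := by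
  have := isZClosed_mpow (K := K) (fun (_ : Fin 1) => c) (isZClosed_singleton (fun _ => a))
  convert this using 1
  ext y
  constructor
  · intro h; exact funext fun _ => h
  · intro h; exact congrFun h 0

end

variable {n : ℕ}

/-- The algebraic subgroup attached to a lattice. -/
def latTorus (K : Type) [Field K] (L : Submodule ℤ (Fin n → ℤ)) : Set (Fin n → Kˣ) :=
  {y | ∀ c ∈ L, chi y c = 1}

lemma latTorus_isAlgSubgroup (L : Submodule ℤ (Fin n → ℤ)) : IsAlgSubgroup K (latTorus K L) := by
  obtain ⟨k, M, hM⟩ := Submodule.fg_iff_exists_fin_generating_family.mp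
    (IsNoetherian.noetherian L)
  refine ⟨k, M, ?_⟩
  ext y
  constructor
  · intro hy
    funext j
    exact hy (M j) (hM ▸ Submodule.subset_span ⟨j, rfl⟩)
  · intro hy c hc
    have : L ≤ LinearMap.ker (chiHom y) := by
      rw [← hM, Submodule.span_le]
      rintro _ ⟨j, rfl⟩
      have := congrFun hy j
      show chiHom y (M j) = 0
      rw [chiHom_apply]
      exact this
    exact this hc

lemma isZClosed_algSubgroup {H : Set (Fin n → Kˣ)} (h : IsAlgSubgroup K H) : IsZClosed K H := by
  obtain ⟨k, M, rfl⟩ := h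
  exact isZClosed_mpow M (isZClosed_singleton 1)

/-- Parametrization data of the torus of a saturated lattice. -/
lemma latTorus_param (L : Submodule ℤ (Fin n → ℤ))
    (hL : ∀ (m : ℤ) (c : Fin n → ℤ), m ≠ 0 → m • c ∈ L → c ∈ L) :
    ∃ (N : Matrix (Fin n) (Fin (Module.finrank ℤ ((Fin n → ℤ) ⧸ L))) ℤ)
      (N' : Matrix (Fin (Module.finrank ℤ ((Fin n → ℤ) ⧸ L))) (Fin n) ℤ),
      (∀ z, mpow K N z ∈ latTorus K L) ∧ (∀ z, mpow K N' (mpow K N z) = z) ∧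
      (∀ y ∈ latTorus K L, mpow K N (mpow K N' y) = y) := by
  have htf : Module.IsTorsionFree ℤ ((Fin n → ℤ) ⧸ L) := by
    rw [Module.isTorsionFree_iff_smul_eq_zero]
    intro m x hmx
    by_cases hm : m = 0
    · left; exact hm
    · right
      obtain ⟨c, rfl⟩ := L.mkQ_surjective x
      rw [← map_smul, Submodule.mkQ_apply, Submodule.Quotient.mk_eq_zero] at hmx
      rw [Submodule.mkQ_apply, Submodule.Quotient.mk_eq_zero]
      exact hL m c hm hmx
  have : Module.Free ℤ ((Fin n → ℤ) ⧸ L) := Module.free_of_finite_type_torsion_free'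
  set d := Module.finrank ℤ ((Fin n → ℤ) ⧸ L)
  let B := Module.finBasis ℤ ((Fin n → ℤ) ⧸ L)
  let π : (Fin n → ℤ) →ₗ[ℤ] (Fin d → ℤ) := B.equivFun.toLinearMap ∘ₗ L.mkQ
  have hπs : Function.Surjective π := B.equivFun.surjective.comp L.mkQ_surjective
  have hπ0 : ∀ c, π c = 0 ↔ c ∈ L := fun c => by
    simp only [π, LinearMap.comp_apply, LinearEquiv.coe_coe, map_eq_zero_iff _ B.equivFun.injective,
      Submodule.mkQ_apply, Submodule.Quotient.mk_eq_zero]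
  obtain ⟨σ, hσ⟩ := Module.projective_lifting_property π LinearMap.id hπs
  have hσ' : ∀ a, π (σ a) = a := fun a => by
    rw [← LinearMap.comp_apply, hσ]; rfl
  have hN : ∀ z c, chi (mpow K (fun i => π (Pi.single i 1)) z) c = chi z (π c) := by
    intro z c
    have : chiHom (mpow K (fun i => π (Pi.single i 1)) z) = chiHom z ∘ₗ π := by
      apply LinearMap.pi_ext'
      intro i
      apply LinearMap.ext_ring
      simp only [LinearMap.comp_apply, LinearMap.single_apply, chiHom_apply, chi_single]
      rfl
    have h2 := LinearMap.congr_fun this c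
    exact h2
  have hN' : ∀ y a, chi (mpow K (fun j => σ (Pi.single j 1)) y) a = chi y (σ a) := by
    intro y a
    have : chiHom (mpow K (fun j => σ (Pi.single j 1)) y) = chiHom y ∘ₗ σ := by
      apply LinearMap.pi_ext'
      intro i
      apply LinearMap.ext_ring
      simp only [LinearMap.comp_apply, LinearMap.single_apply, chiHom_apply, chi_single]
      rfl
    exact LinearMap.congr_fun this a
  refine ⟨fun i => π (Pi.single i 1), fun j => σ (Pi.single j 1), ?_, ?_, ?_⟩
  · intro z c hc
    rw [hN, (hπ0 c).mpr hc, chi_zero]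
  · intro z
    funext j
    show chi (mpow K _ z) (σ (Pi.single j 1)) = z j
    rw [hN, hσ', chi_single]
  · intro y hy
    funext i
    show chi (mpow K _ y) (π (Pi.single i 1)) = y i
    rw [hN']
    have h1 : σ (π (Pi.single i 1)) - Pi.single i 1 ∈ L := by
      rw [← hπ0, map_sub, hσ', sub_self]
    have h2 : σ (π (Pi.single i 1)) = (σ (π (Pi.single i 1)) - Pi.single i 1) + Pi.single i 1 := by
      abel
    rw [h2, chi_add, hy _ h1, one_mul, chi_single]

lemma latTorus_subtorus_vdim [IsAlgClosed K] (L : Submodule ℤ (Fin n → ℤ))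
    (hL : ∀ (m : ℤ) (c : Fin n → ℤ), m ≠ 0 → m • c ∈ L → c ∈ L) :
    IsSubtorus K (latTorus K L) ∧
      vdim K (latTorus K L) = Module.finrank ℤ ((Fin n → ℤ) ⧸ L) := by
  have : Infinite K := IsAlgClosed.instInfinite
  obtain ⟨N, N', h1, h2, h3⟩ := latTorus_param (K := K) L hL
  have hcl := isZClosed_algSubgroup (latTorus_isAlgSubgroup (K := K) L)
  -- transfer to the torus
  have tr : ∀ D, IsIrredVar K D → IsIrredVar K (latTorus K L ∩ {y | mpow K N' y ∈ D}) := by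
    rintro D ⟨hc, ⟨z, hz⟩, hirr⟩
    refine ⟨isZClosed_inter hcl (isZClosed_mpow N' hc), ⟨mpow K N z, h1 z, ?_⟩, ?_⟩
    · rw [Set.mem_setOf_eq, h2]; exact hz
    · intro C₁ C₂ hC₁ hC₂ hsub
      have key : ∀ C, D ⊆ {z | mpow K N z ∈ C} →
          latTorus K L ∩ {y | mpow K N' y ∈ D} ⊆ C := by
        rintro C hDC y ⟨hy1, hy2⟩
        have := hDC hy2
        rwa [Set.mem_setOf_eq, h3 y hy1] at this
      rcases hirr {z | mpow K N z ∈ C₁} {z | mpow K N z ∈ C₂} (isZClosed_mpow N hC₁)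
        (isZClosed_mpow N hC₂) (fun z hz => hsub ⟨h1 z, by rwa [Set.mem_setOf_eq, h2]⟩) with h | h
      · left; exact key _ h
      · right; exact key _ h
  have tr' : ∀ C, C ⊆ latTorus K L → IsIrredVar K C → IsIrredVar K {z | mpow K N z ∈ C} := by
    rintro C hCL ⟨hc, ⟨y, hy⟩, hirr⟩
    refine ⟨isZClosed_mpow N hc, ⟨mpow K N' y, ?_⟩, ?_⟩
    · rw [Set.mem_setOf_eq, h3 y (hCL hy)]; exact hy
    · intro D₁ D₂ hD₁ hD₂ hsub
      have key : ∀ D, C ⊆ {y | mpow K N' y ∈ D} → {z | mpow K N z ∈ C} ⊆ D := by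
        intro D hCD z hz
        have := hCD hz
        rwa [Set.mem_setOf_eq, h2] at this
      rcases hirr {z | mpow K N' z ∈ D₁} {z | mpow K N' z ∈ D₂} (isZClosed_mpow N' hD₁)
        (isZClosed_mpow N' hD₂) (fun y hy => hsub (by rwa [Set.mem_setOf_eq, h3 y (hCL hy)]))
        with h | h
      · left; exact key _ h
      · right; exact key _ h
  refine ⟨⟨latTorus_isAlgSubgroup L, ?_⟩, le_antisymm ?_ ?_⟩
  · have := tr Set.univ isIrredVar_univ
    simpa using this
  · apply vdim_le
    intro d Wc hW hm
    have := chain_le (K := K) (fun i => {z | mpow K N z ∈ Wc i})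
      (fun i => tr' _ (hW i).2 (hW i).1) (by
        intro i j hij
        have hs := hm hij
        refine lt_of_le_of_ne (fun z hz => hs.le hz) ?_
        intro he
        obtain ⟨y, hy1, hy2⟩ := Set.exists_of_ssubset hs
        apply hy2
        have h4 : mpow K N' y ∈ {z | mpow K N z ∈ Wc j} := by
          rwa [Set.mem_setOf_eq, h3 y ((hW j).2 hy1)]
        have h5 : mpow K N' y ∈ {z | mpow K N z ∈ Wc i} := by
          have he' : {z | mpow K N z ∈ Wc i} = {z | mpow K N z ∈ Wc j} := he
          rw [he']; exact h4
        rwa [Set.mem_setOf_eq, h3 y ((hW j).2 hy1)] at h5)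
    simpa using this
  · have hu := vdim_univ (K := K) (ι := Fin (Module.finrank ℤ ((Fin n → ℤ) ⧸ L)))
    rw [Fintype.card_fin] at hu
    conv_lhs => rw [← hu]
    apply vdim_le
    intro d Wc hW hm
    refine le_vdim (fun i => latTorus K L ∩ {y | mpow K N' y ∈ Wc i})
      (fun i => ⟨tr _ (hW i).1, Set.inter_subset_left⟩) ?_
    intro i j hij
    have hs := hm hij
    refine lt_of_le_of_ne (fun z hz => ⟨hz.1, hs.le hz.2⟩) ?_
    intro he
    obtain ⟨z, hz1, hz2⟩ := Set.exists_of_ssubset hs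
    apply hz2
    have he' : latTorus K L ∩ {y | mpow K N' y ∈ Wc i} =
      latTorus K L ∩ {y | mpow K N' y ∈ Wc j} := he
    have h4 : mpow K N z ∈ latTorus K L ∩ {y | mpow K N' y ∈ Wc j} :=
      ⟨h1 z, by rwa [Set.mem_setOf_eq, h2]⟩
    rw [← he'] at h4
    have := h4.2
    rwa [Set.mem_setOf_eq, h2] at this

end Mono
end BadFields

namespace BadFields
open MvPolynomial

/-! ### Minimal tori and codimension -/

section Min

variable {K : Type} [Field K]

lemma isZClosed_union {ι : Type} [Fintype ι] {C D : Set (ι → Kˣ)} (hC : IsZClosed K C)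
    (hD : IsZClosed K D) : IsZClosed K (C ∪ D) := by
  obtain ⟨S, rfl⟩ := hC
  obtain ⟨R, rfl⟩ := hD
  refine ⟨{h | ∃ f ∈ S, ∃ g ∈ R, h = f * g}, ?_⟩
  ext x
  constructor
  · rintro (h | h)
    · rintro _ ⟨f, hf, g, hg, rfl⟩
      rw [map_mul, h f hf, zero_mul]
    · rintro _ ⟨f, hf, g, hg, rfl⟩
      rw [map_mul, h g hg, mul_zero]
  · intro h
    by_cases hx : x ∈ zeroSet K S
    · exact Or.inl hx
    · right
      have : ∃ f ∈ S, eval (fun i => (x i : K)) f ≠ 0 := by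
        by_contra! hcon
        exact hx hcon
      obtain ⟨f, hf, hf0⟩ := this
      intro g hg
      have := h _ ⟨f, hf, g, hg, rfl⟩
      rw [map_mul] at this
      exact (mul_eq_zero.mp this).resolve_left hf0

lemma isZClosed_empty {ι : Type} [Fintype ι] : IsZClosed K (∅ : Set (ι → Kˣ)) := by
  refine ⟨{1}, ?_⟩
  ext x
  simp [zeroSet]

lemma isZClosed_biUnion {ι α : Type} [Fintype ι] (F : Finset α) (C : α → Set (ι → Kˣ))
    (hC : ∀ a, IsZClosed K (C a)) : IsZClosed K (⋃ a ∈ F, C a) := by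
  classical
  induction F using Finset.induction_on with
  | empty => simpa using isZClosed_empty
  | insert a F _ ih =>
    rw [Finset.set_biUnion_insert]
    exact isZClosed_union (hC a) ih

lemma irred_biUnion {ι α : Type} [Fintype ι] {S : Set (ι → Kˣ)} (hS : IsIrredVar K S)
    (F : Finset α) (C : α → Set (ι → Kˣ))
    (hC : ∀ a, IsZClosed K (C a)) (h : S ⊆ ⋃ a ∈ F, C a) : ∃ a ∈ F, S ⊆ C a := by
  classical
  induction F using Finset.induction_on with
  | empty =>
    obtain ⟨x, hx⟩ := hS.2.1
    simpa using h hx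
  | insert a F _ ih =>
    rw [Finset.set_biUnion_insert] at h
    rcases hS.2.2 _ _ (hC a) (isZClosed_biUnion F C hC) h with h | h
    · exact ⟨a, Finset.mem_insert_self _ _, h⟩
    · obtain ⟨b, hb, hbS⟩ := ih h
      exact ⟨b, Finset.mem_insert_of_mem hb, hbS⟩

variable {n : ℕ}

/-- The lattice of characters constant on `S`. -/
def constLat (S : Set (Fin n → Kˣ)) : Submodule ℤ (Fin n → ℤ) where
  carrier := {c | ∀ x ∈ S, ∀ y ∈ S, chi x c = chi y c}
  zero_mem' := fun x _ y _ => by rw [chi_zero, chi_zero]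
  add_mem' := fun {c d} hc hd x hx y hy => by
    rw [chi_add, chi_add, hc x hx y hy, hd x hx y hy]
  smul_mem' := fun m c hc x hx y hy => by
    rw [chi_smul, chi_smul, hc x hx y hy]

lemma mem_constLat {S : Set (Fin n → Kˣ)} {c : Fin n → ℤ} :
    c ∈ constLat S ↔ ∀ x ∈ S, ∀ y ∈ S, chi x c = chi y c := Iff.rfl

lemma finite_zpow_eq_one {m : ℤ} (hm : m ≠ 0) : {u : Kˣ | u ^ m = 1}.Finite := by
  have : NeZero m.natAbs := ⟨Int.natAbs_ne_zero.mpr hm⟩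
  have h : Finite (rootsOfUnity m.natAbs K) := inferInstance
  refine Set.Finite.subset (Set.toFinite (rootsOfUnity m.natAbs K : Set Kˣ)) ?_
  intro u hu
  have hu' : u ^ m = 1 := hu
  show u ∈ rootsOfUnity m.natAbs K
  rw [mem_rootsOfUnity]
  rcases Int.natAbs_eq m with h | h
  · rw [h, zpow_natCast] at hu'; exact hu'
  · rw [h, zpow_neg, zpow_natCast, inv_eq_one] at hu'; exact hu'

lemma constLat_sat {S : Set (Fin n → Kˣ)} (hS : IsIrredVar K S) (m : ℤ) (c : Fin n → ℤ)
    (hm : m ≠ 0) (hc : m • c ∈ constLat S) : c ∈ constLat S := by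
  obtain ⟨x₀, hx₀⟩ := hS.2.1
  obtain ⟨a, _, ha⟩ := irred_biUnion hS (finite_zpow_eq_one (K := K) hm).toFinset
    (fun u => {y | chi y c = chi x₀ c * u}) (fun u => isZClosed_chi _ _) (by
      intro y hy
      rw [Set.mem_iUnion₂]
      refine ⟨(chi x₀ c)⁻¹ * chi y c, ?_, ?_⟩
      · rw [Set.Finite.mem_toFinset]
        show _ ^ m = 1
        rw [mul_zpow, inv_zpow, ← chi_smul, ← chi_smul, hc x₀ hx₀ y hy, inv_mul_cancel]
      · show chi y c = _
        rw [mul_inv_cancel_left])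
  intro x hx y hy
  rw [show chi x c = _ from ha hx, show chi y c = _ from ha hy]

lemma subset_coset_constLat {S : Set (Fin n → Kˣ)} {b : Fin n → Kˣ} (hb : b ∈ S) :
    S ⊆ coset K b (latTorus K (constLat S)) := by
  intro y hy
  refine ⟨b⁻¹ * y, ?_, mul_inv_cancel_left b y⟩
  intro c hc
  have h := hc y hy b hb
  have h2 : chi (b * (b⁻¹ * y)) c = chi b c := by rw [mul_inv_cancel_left]; exact h
  rw [chi_mul] at h2
  exact mul_eq_left.mp h2

lemma isMinTorus_constLat [IsAlgClosed K] {S : Set (Fin n → Kˣ)} (hS : IsIrredVar K S) :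
    IsMinTorus K S (latTorus K (constLat S)) := by
  refine ⟨(latTorus_subtorus_vdim _ (constLat_sat hS)).1, ?_, ?_⟩
  · obtain ⟨b, hb⟩ := hS.2.1
    exact ⟨b, subset_coset_constLat hb⟩
  · rintro T' ⟨⟨k, N, rfl⟩, -⟩ ⟨c, hc⟩ y hy
    show mpow K N y = 1
    funext j
    refine hy (N j) ?_
    intro x hx z hz
    obtain ⟨x', hx', rfl⟩ := hc hx
    obtain ⟨z', hz', rfl⟩ := hc hz
    have e1 : chi x' (N j) = 1 := congrFun (show mpow K N x' = 1 from hx') j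
    have e2 : chi z' (N j) = 1 := congrFun (show mpow K N z' = 1 from hz') j
    simp only [chi_mul, e1, e2]

lemma cd_le {V A : Set (Fin n → Kˣ)} {c : Fin n → Kˣ} (hA : IsSubtorus K A)
    (h : V ⊆ coset K c A) : cd K V ≤ vdim K A - vdim K V := by
  unfold cd
  have hm : vdim K A ∈ {d | ∃ T c, IsSubtorus K T ∧ V ⊆ coset K c T ∧ d = vdim K T} :=
    ⟨A, c, hA, h, rfl⟩
  exact Nat.sub_le_sub_right (Nat.sInf_le hm) _

lemma vdim_minTorus_le {V A : Set (Fin n → Kˣ)} (hA : IsMinTorus K V A) :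
    vdim K A - vdim K V ≤ cd K V := by
  unfold cd
  refine Nat.sub_le_sub_right ?_ _
  obtain ⟨c, hc⟩ := hA.2.1
  have hne : Set.Nonempty {d | ∃ T c, IsSubtorus K T ∧ V ⊆ coset K c T ∧ d = vdim K T} :=
    ⟨_, A, c, hA.1, hc, rfl⟩
  obtain ⟨T, c, hT, hVT, he⟩ := Nat.sInf_mem hne
  rw [he]
  exact vdim_mono (hA.2.2 T hT ⟨c, hVT⟩)

/-- Saturation of a lattice. -/
def satLat (R : Submodule ℤ (Fin n → ℤ)) : Submodule ℤ (Fin n → ℤ) where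
  carrier := {c | ∃ m : ℤ, m ≠ 0 ∧ m • c ∈ R}
  zero_mem' := ⟨1, one_ne_zero, by simp⟩
  add_mem' := by
    rintro c d ⟨m, hm, hc⟩ ⟨l, hl, hd⟩
    refine ⟨m * l, mul_ne_zero hm hl, ?_⟩
    rw [smul_add]
    refine R.add_mem ?_ ?_
    · rw [mul_comm, mul_smul]; exact R.smul_mem _ hc
    · rw [mul_smul]; exact R.smul_mem _ hd
  smul_mem' := by
    rintro a c ⟨m, hm, hc⟩
    exact ⟨m, hm, by rw [smul_comm]; exact R.smul_mem _ hc⟩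

lemma finrank_satLat_le (R : Submodule ℤ (Fin n → ℤ)) :
    Module.finrank ℤ (satLat R) ≤ Module.finrank ℤ R := by
  let B := Module.finBasis ℤ (satLat R)
  have hB : ∀ i, ∃ m : ℤ, m ≠ 0 ∧ m • (B i : Fin n → ℤ) ∈ R := fun i => (B i).2
  choose m hm hmR using hB
  have hli : LinearIndependent ℤ (fun i => (⟨m i • (B i : Fin n → ℤ), hmR i⟩ : R)) := by
    rw [Fintype.linearIndependent_iff]
    intro g hg i
    have h1 : ∑ i, (g i * m i) • B i = 0 := by
      apply Subtype.ext
      have := congrArg (Subtype.val) hg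
      simpa [mul_smul] using this
    have := (Fintype.linearIndependent_iff.mp B.linearIndependent) _ h1 i
    exact (mul_eq_zero.mp this).resolve_right (hm i)
  have := hli.fintype_card_le_finrank
  simpa using this

lemma finrank_quot (L : Submodule ℤ (Fin n → ℤ)) :
    Module.finrank ℤ ((Fin n → ℤ) ⧸ L) + Module.finrank ℤ L = n := by
  have := Submodule.finrank_quotient_add_finrank L
  simpa using this

lemma vdim_algSubgroup_ge [IsAlgClosed K] {k : ℕ} (N : Matrix (Fin k) (Fin n) ℤ) :
    n ≤ vdim K {y : Fin n → Kˣ | mpow K N y = 1} + k := by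
  let R : Submodule ℤ (Fin n → ℤ) := Submodule.span ℤ (Set.range fun j : Fin k => N j)
  have hR : Module.finrank ℤ R ≤ k := by
    have := finrank_range_le_card (R := ℤ) (fun j : Fin k => (N j : Fin n → ℤ))
    rw [Fintype.card_fin] at this
    exact this
  have hsat : ∀ (m : ℤ) (c : Fin n → ℤ), m ≠ 0 → m • c ∈ satLat R → c ∈ satLat R := by
    rintro m c hm ⟨l, hl, hc⟩
    exact ⟨l * m, mul_ne_zero hl hm, by rw [mul_smul]; exact hc⟩
  have h1 := (latTorus_subtorus_vdim (K := K) (satLat R) hsat).2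
  have h2 : latTorus K (satLat R) ⊆ {y : Fin n → Kˣ | mpow K N y = 1} := by
    intro y hy
    show mpow K N y = 1
    funext j
    exact hy (N j) ⟨1, one_ne_zero, by rw [one_smul]; exact Submodule.subset_span ⟨j, rfl⟩⟩
  have h3 := vdim_mono h2
  have h4 := finrank_satLat_le R
  have h5 := finrank_quot (satLat R)
  omega

lemma mem_divHull_empty {x : Kˣ} : x ∈ divHull K ∅ ↔ IsOfFinOrder x := by
  rw [isOfFinOrder_iff_pow_eq_one]
  constructor
  · rintro ⟨k, hk, h⟩
    rw [Subgroup.closure_empty, Subgroup.mem_bot] at h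
    exact ⟨k, Nat.pos_of_ne_zero hk, h⟩
  · rintro ⟨k, hk, h⟩
    exact ⟨k, hk.ne', by rw [h]; exact Subgroup.one_mem _⟩

lemma mem_relLattice {b : Fin n → Kˣ} {c : Fin n → ℤ} :
    c ∈ relLattice K ∅ b ↔ IsOfFinOrder (chi b c) := mem_divHull_empty

lemma relLattice_sat (b : Fin n → Kˣ) (m : ℤ) (c : Fin n → ℤ)
    (hm : m ≠ 0) (hc : m • c ∈ relLattice K ∅ b) : c ∈ relLattice K ∅ b := by
  rw [mem_relLattice] at hc ⊢
  rw [chi_smul, isOfFinOrder_iff_zpow_eq_one] at hc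
  obtain ⟨l, hl, h⟩ := hc
  rw [isOfFinOrder_iff_zpow_eq_one]
  exact ⟨m * l, mul_ne_zero hm hl, by rw [zpow_mul]; exact h⟩

lemma ldim_eq (b : Fin n → Kˣ) :
    ldim K b = Module.finrank ℤ ((Fin n → ℤ) ⧸ relLattice K ∅ b) := by
  have := finrank_quot (relLattice K ∅ b)
  unfold ldim ldimRel
  omega

lemma finOrder_of_ldim_zero {b : Fin n → Kˣ} (h : ldim K b = 0) (i : Fin n) :
    IsOfFinOrder (b i) := by
  classical
  rw [ldim_eq, Module.finrank_eq_zero_iff] at h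
  obtain ⟨m, hm, h⟩ := h ((relLattice K ∅ b).mkQ (Pi.single i 1))
  rw [← map_smul, Submodule.mkQ_apply, Submodule.Quotient.mk_eq_zero] at h
  have := relLattice_sat b m _ hm h
  rwa [mem_relLattice, chi_single] at this

end Min
end BadFields

namespace BadFields
open MvPolynomial

/-! ### The locus of a point over an algebraically closed subfield -/

section Locus

variable {k K : Type} [Field k] [Field K] [Algebra k K] {ι : Type} [Fintype ι]

/-- Apply a linear functional to the coefficients. -/
noncomputable def comp {σ : Type} (φ : K →ₗ[k] k) (f : MvPolynomial σ K) : MvPolynomial σ k :=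
  ∑ d ∈ f.support, monomial d (φ (coeff d f))

lemma coeff_comp {σ : Type} (φ : K →ₗ[k] k) (f : MvPolynomial σ K) (d : σ →₀ ℕ) :
    coeff d (comp φ f) = φ (coeff d f) := by
  classical
  rw [comp, coeff_sum]
  simp only [coeff_monomial]
  rw [Finset.sum_ite_eq' f.support d]
  split_ifs with h
  · rfl
  · rw [notMem_support_iff.mp h, map_zero]

lemma eval_comp {σ : Type} (φ : K →ₗ[k] k) (f : MvPolynomial σ K) (x : σ → k) :
    eval x (comp φ f) = φ (eval (fun i => algebraMap k K (x i)) f) := by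
  rw [comp, map_sum, eval_eq (fun i => algebraMap k K (x i)) f, map_sum]
  refine Finset.sum_congr rfl fun d _ => ?_
  rw [eval_monomial, Finsupp.prod]
  have : (∏ i ∈ d.support, algebraMap k K (x i) ^ d i) =
      algebraMap k K (∏ i ∈ d.support, x i ^ d i) := by simp
  rw [this, mul_comm (coeff d f), ← Algebra.smul_def, map_smul, smul_eq_mul, mul_comm]

lemma eval_eq_zero_of_comp {σ τ : Type} (B : Module.Basis τ k K) (f : MvPolynomial σ K)
    (b : σ → K) (h : ∀ e, aeval b (comp (B.coord e) f) = 0) : eval b f = 0 := by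
  classical
  set E : Finset τ := f.support.biUnion (fun d => (B.repr (coeff d f)).support) with hE
  have hcoef : ∀ d ∈ f.support, coeff d f = ∑ e ∈ E, B.coord e (coeff d f) • B e := by
    intro d hd
    conv_lhs => rw [← B.linearCombination_repr (coeff d f), Finsupp.linearCombination_apply]
    rw [Finsupp.sum_of_support_subset (s := E)]
    · rfl
    · exact Finset.subset_biUnion_of_mem (fun d => (B.repr (coeff d f)).support) hd
    · intro i _; rw [zero_smul]
  have h1 : eval b f = ∑ e ∈ E, B e * aeval b (comp (B.coord e) f) := by
    rw [eval_eq]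
    have : ∀ d ∈ f.support, coeff d f * ∏ i ∈ d.support, b i ^ d i =
        ∑ e ∈ E, B e * (algebraMap k K (B.coord e (coeff d f)) * ∏ i ∈ d.support, b i ^ d i) := by
      intro d hd
      conv_lhs => rw [hcoef d hd, Finset.sum_mul]
      refine Finset.sum_congr rfl fun e _ => ?_
      rw [Algebra.smul_def]; ring
    rw [Finset.sum_congr rfl this, Finset.sum_comm]
    refine Finset.sum_congr rfl fun e _ => ?_
    rw [← Finset.mul_sum, comp, map_sum]
    congr 1
    refine Finset.sum_congr rfl fun d _ => ?_
    rw [aeval_monomial, Finsupp.prod]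
  rw [h1]
  exact Finset.sum_eq_zero fun e _ => by rw [h e, mul_zero]

/-- The `K`-point attached to a `k`-point. -/
def basePt (K : Type) [Field K] [Algebra k K] (x : ι → kˣ) : ι → Kˣ :=
  fun i => Units.map (algebraMap k K).toMonoidHom (x i)

lemma coe_basePt (x : ι → kˣ) :
    (fun i => (basePt K x i : K)) = fun i => algebraMap k K (x i) := rfl

lemma chi_basePt (x : ι → kˣ) (c : ι → ℤ) :
    chi (basePt K x) c = Units.map (algebraMap k K).toMonoidHom (chi x c) := by
  simp [chi, basePt]

/-- The ideal of `b` over `k`. -/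
noncomputable def idl (k : Type) [Field k] [Algebra k K] (b : ι → Kˣ) : Ideal (MvPolynomial ι k) :=
  RingHom.ker (aeval (fun i => (b i : K)) : MvPolynomial ι k →ₐ[k] K)

lemma mem_idl {b : ι → Kˣ} {p : MvPolynomial ι k} :
    p ∈ idl k b ↔ aeval (fun i => (b i : K)) p = 0 := RingHom.mem_ker

instance idl_prime (b : ι → Kˣ) : (idl k b).IsPrime := RingHom.ker_isPrime _

lemma idl_X (b : ι → Kˣ) : (∏ i, X i : MvPolynomial ι k) ∉ idl k b := by
  rw [mem_idl, map_prod, Finset.prod_eq_zero_iff]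
  rintro ⟨i, _, hi⟩
  simp at hi

/-- `k`-points of the locus. -/
def kpts (k : Type) [Field k] [Algebra k K] (b : ι → Kˣ) : Set (ι → Kˣ) :=
  basePt K '' {x : ι → kˣ | ∀ p ∈ idl k b, eval (fun i => (x i : k)) p = 0}

lemma exists_kpt [IsAlgClosed k] {b : ι → Kˣ} {p : MvPolynomial ι k} (hp : p ∉ idl k b) :
    ∃ x : ι → kˣ, (∀ p ∈ idl k b, eval (fun i => (x i : k)) p = 0) ∧
      eval (fun i => (x i : k)) p ≠ 0 := by
  by_contra! hcon
  exact hp (torus_nullstellensatz (idl k b) (idl_X b) hcon)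

lemma mem_vI_kpts_iff [IsAlgClosed k] {τ : Type} (B : Module.Basis τ k K) {b : ι → Kˣ}
    {f : MvPolynomial ι K} :
    f ∈ vI (kpts k b) ↔ ∀ e, comp (B.coord e) f ∈ idl k b := by
  constructor
  · intro h e
    by_contra hcon
    obtain ⟨x, hx, hx0⟩ := exists_kpt hcon
    apply hx0
    rw [eval_comp]
    have := h _ ⟨x, hx, rfl⟩
    rw [coe_basePt] at this
    rw [this, map_zero]
  · rintro h _ ⟨x, hx, rfl⟩
    rw [coe_basePt]
    apply B.ext_elem
    intro e
    have := hx _ (h e)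
    rw [eval_comp] at this
    simpa using this

lemma kpts_nonempty [IsAlgClosed k] (b : ι → Kˣ) : (kpts k b).Nonempty := by
  obtain ⟨x, hx, -⟩ := exists_kpt (idl_X (k := k) b)
  exact ⟨_, x, hx, rfl⟩

lemma locus_irred [IsAlgClosed k] (b : ι → Kˣ) : IsIrredVar K (zcl K (kpts k b)) := by
  apply isIrredVar_zcl (kpts_nonempty b)
  intro f g hfg
  let B := Module.Basis.ofVectorSpace k K
  by_contra! hcon
  obtain ⟨hf, hg⟩ := hcon
  rw [mem_vI_kpts_iff B] at hf hg
  push Not at hf hg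
  obtain ⟨e, he⟩ := hf
  obtain ⟨e', he'⟩ := hg
  have hn : comp (B.coord e) f * comp (B.coord e') g ∉ idl k b := fun h =>
    ((idl_prime b).mem_or_mem h).elim he he'
  obtain ⟨x, hx, hx0⟩ := exists_kpt hn
  have h0 := hfg _ ⟨x, hx, rfl⟩
  rw [map_mul, coe_basePt] at h0
  rw [map_mul, eval_comp, eval_comp] at hx0
  rcases mul_eq_zero.mp h0 with h | h
  · rw [h] at hx0; simp at hx0
  · rw [h] at hx0; simp at hx0

lemma self_mem_locus [IsAlgClosed k] (b : ι → Kˣ) : b ∈ zcl K (kpts k b) := by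
  rw [← zeroSet_vI (isZClosed_zcl (kpts k b)), vI_zcl]
  intro f hf
  let B := Module.Basis.ofVectorSpace k K
  exact eval_eq_zero_of_comp B f _ ((mem_vI_kpts_iff B).mp hf)

lemma card_le_locus [IsAlgClosed k] [IsAlgClosed K] (b : ι → Kˣ) {τ : Type} [Fintype τ] (j : τ → ι)
    (h : AlgebraicIndependent k (fun t => (b (j t) : K))) :
    Fintype.card τ ≤ vdim K (zcl K (kpts k b)) := by
  apply card_le_vdim (locus_irred b) j
  intro p hp
  rw [vI_zcl] at hp
  let B := Module.Basis.ofVectorSpace k K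
  have key : ∀ e, comp (B.coord e) p = 0 := by
    intro e
    have h1 : rename j (comp (B.coord e) p) ∈ idl k b := by
      by_contra hcon
      obtain ⟨x, hx, hx0⟩ := exists_kpt hcon
      apply hx0
      have := hp _ ⟨x, hx, rfl⟩
      rw [coe_basePt, eval_rename] at this
      rw [eval_rename, eval_comp]
      have h2 : (fun i => algebraMap k K (((fun i => (x i : k)) ∘ j) i)) =
        (fun i => algebraMap k K (x i : k)) ∘ j := rfl
      rw [h2, this, map_zero]
    rw [mem_idl, aeval_rename] at h1
    exact (algebraicIndependent_iff.mp h) _ h1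
  ext d
  rw [coeff_zero]
  apply B.ext_elem
  intro e
  have := congrArg (coeff d) (key e)
  rw [coeff_comp] at this
  simpa using this

lemma locus_subset_of_over (b : ι → Kˣ) {W : Set (ι → Kˣ)}
    (hW : IsClosedOver K (Set.range (algebraMap k K)) W) (hb : b ∈ W) :
    zcl K (kpts k b) ⊆ W := by
  obtain ⟨S, hS, rfl⟩ := hW
  apply zcl_subset ⟨S, rfl⟩
  rintro _ ⟨x, hx, rfl⟩ p hp
  have : p ∈ Set.range (map (algebraMap k K)) := by
    rw [mem_range_map_iff_coeffs_subset]
    intro a ha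
    obtain ⟨m, _, rfl⟩ := mem_coeffs_iff.mp ha
    exact hS p hp m
  obtain ⟨q, rfl⟩ := this
  have hq : q ∈ idl k b := by
    rw [mem_idl, aeval_def, ← eval_map]
    exact hb _ hp
  have := hx q hq
  rw [coe_basePt, eval_map, ← Function.comp_def (algebraMap k K), ← eval₂_comp, this, map_zero]

lemma chi_mul_neg {F : Type} [Field F] (y : ι → Fˣ) (c : ι → ℤ) :
    chi y c * ∏ i, y i ^ (-c i).toNat = ∏ i, y i ^ (c i).toNat := by
  rw [chi, ← Finset.prod_mul_distrib]
  refine Finset.prod_congr rfl fun i _ => ?_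
  rw [← zpow_natCast, ← zpow_natCast, ← zpow_add]
  congr 1
  omega

lemma locus_chi (b : ι → Kˣ) (c : ι → ℤ) (ζ : kˣ)
    (h : chi b c = Units.map (algebraMap k K).toMonoidHom ζ) :
    zcl K (kpts k b) ⊆ {y | chi y c = chi b c} := by
  apply zcl_subset (isZClosed_chi _ _)
  rintro _ ⟨x, hx, rfl⟩
  have hg : (∏ i, X i ^ (c i).toNat - C (ζ : k) * ∏ i, X i ^ (-c i).toNat : MvPolynomial ι k) ∈
      idl k b := by
    rw [mem_idl]
    have h1 := congrArg (fun u : Kˣ => (u : K)) (chi_mul_neg b c)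
    rw [h] at h1
    simp only [Units.val_mul, Units.coe_prod, Units.val_pow_eq_pow_val, Units.coe_map] at h1
    simp only [map_sub, map_mul, map_prod, map_pow, aeval_X, aeval_C]
    rw [← h1]
    exact sub_self _
  have h2 := hx _ hg
  simp only [map_sub, map_mul, map_prod, map_pow, eval_X, eval_C] at h2
  have h3 : ∏ i, x i ^ (c i).toNat = ζ * ∏ i, x i ^ (-c i).toNat := by
    apply Units.ext
    simp only [Units.val_mul, Units.coe_prod, Units.val_pow_eq_pow_val]
    exact sub_eq_zero.mp h2
  rw [← chi_mul_neg] at h3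
  show chi (basePt K x) c = chi b c
  rw [chi_basePt, h, mul_right_cancel h3]

end Locus

section Main

variable {K : Type} [Field K]

lemma exists_trdeg (s : Set K) (hs : s.Finite) : ∃ t : Finset K, ↑t ⊆ s ∧ t.card = trdegQ K s ∧
    AlgebraicIndependent (⊥ : Subfield K) (fun x : {y : K // y ∈ t} => (x : K)) := by
  have h : trdegQ K s ∈ {d | ∃ t : Finset K, ↑t ⊆ s ∧ t.card = d ∧
    AlgebraicIndependent (⊥ : Subfield K) (fun x : {y : K // y ∈ t} => (x : K))} := by
    apply Nat.sSup_mem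
    · refine ⟨0, ∅, by simp, rfl, ?_⟩
      have : IsEmpty {y : K // y ∈ (∅ : Finset K)} := ⟨fun x => absurd x.2 (Finset.notMem_empty _)⟩
      exact algebraicIndependent_empty_type
    · refine ⟨hs.toFinset.card, ?_⟩
      rintro d ⟨t, ht, rfl, -⟩
      apply Finset.card_le_card
      intro x hx
      exact hs.mem_toFinset.mpr (ht hx)
  exact h

lemma trdegQ_zero (s : Set K) (hs : ∀ x ∈ s, IsAlgebraic (⊥ : Subfield K) x) (hf : s.Finite) :
    trdegQ K s = 0 := by
  obtain ⟨t, hts, hc, hi⟩ := exists_trdeg s hf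
  rw [← hc, Finset.card_eq_zero]
  by_contra hne
  obtain ⟨x, hx⟩ := Finset.nonempty_iff_ne_empty.mpr hne
  exact hi.transcendental ⟨x, hx⟩ (hs x (hts hx))

lemma exists_locus [IsAlgClosed K] {n : ℕ} (b : Fin n → Kˣ) {W : Set (Fin n → Kˣ)}
    (hW : IsClosedOver K (↑(⊥ : Subfield K)) W) (hb : b ∈ W) :
    ∃ V, IsIrredVar K V ∧ b ∈ V ∧ V ⊆ W ∧ V ⊆ coset K b (latTorus K (relLattice K ∅ b)) ∧
      trdegQ K (Set.range fun i => ((b i : Kˣ) : K)) ≤ vdim K V ∧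
      ∃ x ∈ V, ∀ i, (x i : K) ∈ algebraicClosure (⊥ : Subfield K) K := by
  have hcl : IsAlgClosed (algebraicClosure (⊥ : Subfield K) K) :=
    (algebraicClosure.isAlgClosure (⊥ : Subfield K) K).isAlgClosed
  let k := algebraicClosure (⊥ : Subfield K) K
  refine ⟨zcl K (kpts k b), locus_irred b, self_mem_locus b, ?_, ?_, ?_, ?_⟩
  · apply locus_subset_of_over b _ hb
    obtain ⟨S, hS, rfl⟩ := hW
    refine ⟨S, fun p hp m => ?_, rfl⟩
    exact ⟨algebraMap (⊥ : Subfield K) k ⟨_, hS p hp m⟩, rfl⟩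
  · intro y hy
    refine ⟨b⁻¹ * y, ?_, mul_inv_cancel_left b y⟩
    intro c hc
    have hfin := mem_relLattice.mp hc
    have halg : ((chi b c : Kˣ) : K) ∈ k := by
      obtain ⟨m, hm, h1⟩ := isOfFinOrder_iff_pow_eq_one.mp hfin
      rw [mem_algebraicClosure_iff]
      refine IsAlgebraic.of_pow hm ?_
      rw [← Units.val_pow_eq_pow_val, h1]
      exact isAlgebraic_one
    have h := locus_chi (k := k) b c (Units.mk0 ⟨_, halg⟩ (by
      intro h0
      exact (chi b c).ne_zero (congrArg Subtype.val h0))) (Units.ext rfl) hy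
    have h2 : chi (b * (b⁻¹ * y)) c = chi b c := by rw [mul_inv_cancel_left]; exact h
    rw [chi_mul] at h2
    exact mul_eq_left.mp h2
  · obtain ⟨t, hts, hc, hi⟩ := exists_trdeg (Set.range fun i => ((b i : Kˣ) : K))
      (Set.finite_range _)
    have hj : ∀ x : {y : K // y ∈ t}, ∃ i, (b i : K) = x := fun x => hts x.2
    choose j hj using hj
    have := card_le_locus (k := k) b j (by
      have h1 : (fun x => (b (j x) : K)) = fun x : {y : K // y ∈ t} => (x : K) := funext hj
      rw [h1]
      exact hi.algebraicClosure)
    rw [← hc]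
    simpa using this
  · obtain ⟨_, x, hx, rfl⟩ := kpts_nonempty (k := k) b
    refine ⟨_, subset_zcl _ ⟨x, hx, rfl⟩, fun i => (x i : k).2⟩

end Main
end BadFields

namespace BadFields
open MvPolynomial

/-! ### Assembly -/

section Final

variable {K : Type} [Field K]

lemma vdim_lt {ι : Type} [Fintype ι] {S S' : Set (ι → Kˣ)} (hS : IsIrredVar K S)
    (hS' : IsIrredVar K S') (h : S ⊂ S') : vdim K S < vdim K S' := by
  have hmem : vdim K S ∈ {d | ∃ W : Fin (d + 1) → Set (ι → Kˣ),
      (∀ i, IsIrredVar K (W i) ∧ W i ⊆ S) ∧ StrictMono W} := by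
    apply Nat.sSup_mem _ (vdim_bdd S)
    refine ⟨0, fun _ => S, fun _ => ⟨hS, subset_rfl⟩, ?_⟩
    intro i j hij
    exfalso
    have h1 := i.2
    have h2 := j.2
    have h3 : i.1 < j.1 := hij
    omega
  obtain ⟨Wc, hW, hm⟩ := hmem
  refine Nat.lt_of_succ_le (le_vdim (d := vdim K S + 1)
    (Fin.snoc (α := fun _ => Set (ι → Kˣ)) Wc S') ?_ ?_)
  · intro i
    induction i using Fin.lastCases with
    | last => rw [Fin.snoc_last]; exact ⟨hS', subset_rfl⟩
    | cast i => rw [Fin.snoc_castSucc]; exact ⟨(hW i).1, (hW i).2.trans h.le⟩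
  · intro i j hij
    induction j using Fin.lastCases with
    | last =>
      induction i using Fin.lastCases with
      | last => exact absurd hij (lt_irrefl _)
      | cast i =>
        rw [Fin.snoc_last, Fin.snoc_castSucc]
        exact lt_of_le_of_lt (hW i).2 h
    | cast j =>
      induction i using Fin.lastCases with
      | last => exact absurd hij (not_lt.mpr (Fin.le_last _))
      | cast i =>
        rw [Fin.snoc_castSucc, Fin.snoc_castSucc]
        exact hm (Fin.castSucc_lt_castSucc_iff.mp hij)

lemma exists_cdMaximal {ι : Type} [Fintype ι] {V W : Set (ι → Kˣ)} (hV : IsIrredVar K V)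
    (hVW : V ⊆ W) : ∃ S, CdMaximal K S W ∧ V ⊆ S ∧ cd K S ≤ cd K V := by
  let D : Set ℕ := {d | ∃ S, IsIrredVar K S ∧ S ⊆ W ∧ V ⊆ S ∧ cd K S ≤ cd K V ∧ d = vdim K S}
  have hmem : sSup D ∈ D := by
    apply Nat.sSup_mem
    · exact ⟨_, V, hV, hVW, subset_rfl, le_rfl, rfl⟩
    · refine ⟨Fintype.card ι, ?_⟩
      rintro d ⟨S, _, _, _, _, rfl⟩
      exact vdim_le_card S
  have hbd : BddAbove D := by
    refine ⟨Fintype.card ι, ?_⟩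
    rintro d ⟨S, _, _, _, _, rfl⟩
    exact vdim_le_card S
  obtain ⟨S, h1, h2, h3, h4, h5⟩ := hmem
  refine ⟨S, ⟨h1, h2, ?_⟩, h3, h4⟩
  intro S' hS' hSS' hS'W
  by_contra hcon
  have hm : vdim K S' ∈ D :=
    ⟨S', hS', hS'W, h3.trans hSS'.le, (not_lt.mp hcon).trans h4, rfl⟩
  have := le_csSup hbd hm
  have h6 := vdim_lt h1 hS' hSS'
  omega

end Final

/-- The key step in the proof that the free amalgamation class is
axiomatisable: under the Weak CIT data (a) for `W`, the monomial images (b), and the Laurent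
data (c), every green point of `W` outside the exceptional set `W*` satisfies one of the
multiplicative dependencies `b^{M_i} ∈ H_{ij}`. -/
theorem green_points_satisfy_dependence
    (K : Type) [Field K] [IsAlgClosed K] [CharZero K]
    (U : Subgroup Kˣ) (hdiv : DivisibleSub K U)
    (hdelta : ∀ (m : ℕ) (y : Fin m → Kˣ), (∀ i, y i ∈ U) →
      (ldim K y : ℤ) ≤ 2 * (trdegQ K (Set.range fun i => ((y i : Kˣ) : K)) : ℤ))
    {n : ℕ} (hn : 1 ≤ n) (W : Set (Fin n → Kˣ))
    (hWirr : IsIrredVar K W) (hWQ : IsClosedOver K (↑(⊥ : Subfield K)) W)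
    (hWdim : 2 * vdim K W < n)
    (s : ℕ) (T : Fin s → Set (Fin n → Kˣ))
    (hTsub : ∀ i, IsSubtorus K (T i) ∧ T i ≠ Set.univ)
    (hcdmax : ∀ S, CdMaximal K S W → ∀ T', IsMinTorus K S T' →
      T' = Set.univ ∨ ∃ i, T' = T i)
    (k : Fin s → ℕ) (M : ∀ i, Matrix (Fin (k i)) (Fin n) ℤ)
    (hrk : ∀ i, (M i).rank = k i) (hTM : ∀ i, T i = {y | mpow K (M i) y = 1})
    (Wi : ∀ i, Set (Fin (k i) → Kˣ)) (hWi : ∀ i, Wi i = zcl K (mpow K (M i) '' W))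
    (r : Fin s → ℕ) (H : ∀ i, Fin (r i) → Set (Fin (k i) → Kˣ))
    (hH : ∀ i, Wi i ≠ Set.univ →
      (∀ j, IsAlgSubgroup K (H i j) ∧ H i j ≠ Set.univ) ∧
      (∀ y ∈ Wi i, (∀ t, IsOfFinOrder (y t)) → ∃ j, y ∈ H i j))
    (Wstar : Set (Fin n → Kˣ))
    (hWstar : Wstar =
      ⋃ i, {b ∈ W | vdim K W < vdim K (W ∩ coset K b (T i)) + vdim K (Wi i)}) :
    ∀ b ∈ W, b ∉ Wstar → (∀ t, b t ∈ U) →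
      ∃ i, Wi i ≠ Set.univ ∧ ∃ j, mpow K (M i) b ∈ H i j := by
  intro b hbW hbWs hbU
  obtain ⟨V, hVirr, hbV, hVW, hVL, htr, x, hxV, hx⟩ := exists_locus b hWQ hbW
  have hrel := latTorus_subtorus_vdim (K := K) (relLattice K ∅ b) (relLattice_sat b)
  have hcdV := cd_le hrel.1 hVL
  rw [hrel.2, ← ldim_eq] at hcdV
  have hd := hdelta n b hbU
  obtain ⟨S, hSmax, hVS, hcdS⟩ := exists_cdMaximal hVirr hVW
  have hdVW := vdim_mono hVW
  have hdSW := vdim_mono hSmax.2.1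
  have hmin := isMinTorus_constLat hSmax.1
  have hcdS' := vdim_minTorus_le hmin
  have hmins := hcdmax S hSmax _ hmin
  have hSb := subset_coset_constLat (hVS hbV)
  rcases hmins with hu | ⟨i, hi⟩
  · exfalso
    rw [hu, vdim_univ, Fintype.card_fin] at hcdS'
    omega
  · rw [hi] at hcdS' hSb
    have hnot : ¬ vdim K W < vdim K (W ∩ coset K b (T i)) + vdim K (Wi i) := by
      intro hlt
      apply hbWs
      rw [hWstar, Set.mem_iUnion]
      exact ⟨i, hbW, hlt⟩
    have hle := vdim_mono (Set.subset_inter hSmax.2.1 hSb)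
    have hge := vdim_algSubgroup_ge (K := K) (M i)
    rw [← hTM i] at hge
    have hne : Wi i ≠ Set.univ := by
      intro hu
      rw [hu, vdim_univ, Fintype.card_fin] at hnot
      omega
    refine ⟨i, hne, (hH i hne).2 _ ?_ ?_⟩
    · rw [hWi]
      exact subset_zcl _ ⟨b, hbW, rfl⟩
    · have hMU : ∀ j, mpow K (M i) b j ∈ U := fun j =>
        Subgroup.prod_mem _ fun t _ => Subgroup.zpow_mem _ (hbU t) _
      have hMx : mpow K (M i) b = mpow K (M i) x := by
        obtain ⟨z, hz, hzx⟩ := hSb (hVS hxV)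
        rw [hTM i] at hz
        funext j
        have hzj : chi z (M i j) = 1 := congrFun (show mpow K (M i) z = 1 from hz) j
        rw [mpow_apply, mpow_apply, ← hzx]
        show _ = chi (b * z) _
        rw [chi_mul, hzj, mul_one]
      have halg : ∀ y ∈ Set.range fun j => ((mpow K (M i) b j : Kˣ) : K),
          IsAlgebraic (⊥ : Subfield K) y := by
        rintro _ ⟨j, rfl⟩
        show IsAlgebraic (⊥ : Subfield K) ((mpow K (M i) b j : Kˣ) : K)
        rw [← mem_algebraicClosure_iff, hMx]
        show ((∏ t, x t ^ M i j t : Kˣ) : K) ∈ _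
        rw [Units.coe_prod]
        refine prod_mem fun t _ => ?_
        rw [Units.val_zpow_eq_zpow_val]
        exact zpow_mem (hx t) _
      have h0 := hdelta (k i) (mpow K (M i) b) hMU
      rw [trdegQ_zero _ halg (Set.finite_range _)] at h0
      exact finOrder_of_ldim_zero (by omega)

end BadFields
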